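/- Let m be a positive integer, n ≥ 2 an integer, and l : Fin n → ℤ a family of integers each coprime to m, and let ℤ/m act on S^{2n−1} coordinatewise by (a • z)_i = exp(2πi·l_i·a/m)·z_i. Then the fundamental group of the lens space L(l_1,…,l_n) (at any basepoint) is isomorphic to the cyclic group ℤ/m. -/

import Mathlib

open unitInterval Metric

section Sphere

variable {E : Type*} [NormedAddCommGroup E]

/-- A path in a normed space can be approximated within distance `ε` by a smooth
curve with the same endpoints. -/
theorem ContinuousMap.exists_contDiff_approx_eq_endpoints [NormedSpace ℝ E] (f : C(I, E)) {ε : ℝ}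
    (hε : 0 < ε) :
    ∃ g : ℝ → E, ContDiff ℝ 1 g ∧ g 0 = f 0 ∧ g 1 = f 1 ∧ ∀ t : I, dist (g t) (f t) < ε := by
  obtain ⟨n, hn, hn0⟩ := ((Metric.tendsto_nhds.mp (bernsteinApproximation_uniform f) ε hε).and
    (Filter.eventually_ne_atTop 0)).exists
  let g : ℝ → E := fun x ↦ ∑ k : Fin (n + 1),
    ((n.choose k : ℝ) * x ^ (k : ℕ) * (1 - x) ^ (n - (k : ℕ))) • f (bernstein.z k)
  have hg (t : I) : g t = bernsteinApproximation n f t := by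
    simp only [g, bernsteinApproximation.apply, bernstein_apply]
  refine ⟨g, by fun_prop, ?_, ?_, fun t ↦ ?_⟩
  · simpa using hg 0
  · simpa [hn0] using hg 1
  · rw [hg]
    exact (ContinuousMap.dist_apply_le_dist t).trans_lt hn

/-- A smooth curve in a real vector space of dimension at least three misses a line through the
origin, except possibly at the origin itself. -/
theorem ContDiff.exists_unit_vector_forall_smul_ne [NormedSpace ℝ E] [FiniteDimensional ℝ E]
    (hE : 2 < Module.finrank ℝ E) {g : ℝ → E} (hg : ContDiff ℝ 1 g) :
    ∃ v : E, ‖v‖ = 1 ∧ ∀ s t : ℝ, s • g t ≠ v := by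
  have hdense : Dense (Set.range fun p : ℝ × ℝ ↦ p.1 • g p.2)ᶜ :=
    ContDiff.dense_compl_range_of_finrank_lt_finrank (by fun_prop) (by simpa using hE)
  obtain ⟨w, hw⟩ := hdense.nonempty
  have hw' (s t : ℝ) : s • g t ≠ w := fun h ↦ hw ⟨(s, t), h⟩
  have hw0 : ‖w‖ ≠ 0 := fun h ↦ hw' 0 0 (by simpa using (norm_eq_zero.mp h).symm)
  refine ⟨‖w‖⁻¹ • w, by simp [norm_smul, hw0], fun s t h ↦ hw' (‖w‖ * s) t ?_⟩
  rw [mul_smul, h, smul_inv_smul₀ hw0]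

/-- The radial projection of a nonzero vector to the unit sphere. -/
noncomputable def unitSphereProj [NormedSpace ℝ E] (x : {x : E // x ≠ 0}) : sphere (0 : E) 1 :=
  ⟨‖x.1‖⁻¹ • x.1, by simp [norm_smul, x.2]⟩

theorem continuous_unitSphereProj [NormedSpace ℝ E] :
    Continuous (unitSphereProj : {x : E // x ≠ 0} → sphere (0 : E) 1) := by
  refine Continuous.subtype_mk (Continuous.smul (Continuous.inv₀ (by fun_prop) ?_) (by fun_prop)) _
  exact fun x ↦ norm_ne_zero_iff.mpr x.2

/-- A point in the segment between a unit vector and a vector at distance less than one from it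
is nonzero. -/
theorem segment_ne_zero_of_dist_lt_one [NormedSpace ℝ E] {x y : E} (hx : ‖x‖ = 1)
    (h : dist y x < 1) (s : I) : x + (s : ℝ) • (y - x) ≠ 0 := by
  intro h0
  have h1 : ‖x‖ = (s : ℝ) * dist y x := by
    simpa [norm_smul, abs_of_nonneg s.2.1, dist_eq_norm] using
      congr_arg norm (eq_neg_of_add_eq_zero_left h0)
  nlinarith [s.2.1, s.2.2, dist_nonneg (x := y) (y := x)]

variable [InnerProductSpace ℝ E]

/-- The complement of a point in the unit sphere is simply connected. -/
theorem simplyConnectedSpace_sphere_compl_singleton (v : sphere (0 : E) 1) :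
    SimplyConnectedSpace ({v}ᶜ : Set (sphere (0 : E) 1)) := by
  let e := stereographic (norm_eq_of_mem_sphere v)
  let e' : ({v}ᶜ : Set (sphere (0 : E) 1)) ≃ₜ ((ℝ ∙ (v : E))ᗮ : Submodule ℝ E) :=
    e.toHomeomorphSourceTarget.trans (Homeomorph.Set.univ _)
  exact e'.toHomotopyEquiv.simplyConnectedSpace

/-- A loop in the unit sphere that misses a point is null-homotopic. -/
theorem Path.homotopic_refl_of_forall_ne {x v : sphere (0 : E) 1} (γ : Path x x)
    (h : ∀ t, γ t ≠ v) : γ.Homotopic (Path.refl x) := by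
  obtain ⟨F, -⟩ := (isSimplyConnected_iff_exists_homotopy_refl_forall_mem.mp
    (simplyConnectedSpace_sphere_compl_singleton v)).2 x γ h
  exact ⟨F⟩

/-- The unit sphere of a real inner product space of finite dimension at least three is simply
connected. -/
theorem simplyConnectedSpace_sphere [FiniteDimensional ℝ E] (hE : 2 < Module.finrank ℝ E) :
    SimplyConnectedSpace (sphere (0 : E) 1) := by
  rw [simply_connected_iff_loops_nullhomotopic]
  refine ⟨isPathConnected_iff_pathConnectedSpace.mp (isPathConnected_sphere ?_ 0 zero_le_one),
    fun x γ ↦ ?_⟩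
  · rw [← Module.finrank_eq_rank]; exact_mod_cast (by omega : 1 < Module.finrank ℝ E)
  let f : C(I, E) := ⟨fun t ↦ γ t, by fun_prop⟩
  obtain ⟨g, hg, hg0, hg1, hgf⟩ := f.exists_contDiff_approx_eq_endpoints one_pos
  have hgc := hg.continuous
  obtain ⟨v, hv, hgv⟩ := hg.exists_unit_vector_forall_smul_ne hE
  have hne (s t : I) : (γ t : E) + (s : ℝ) • (g t - γ t) ≠ 0 :=
    segment_ne_zero_of_dist_lt_one (norm_eq_of_mem_sphere (γ t)) (hgf t) s
  let H : C(I × I, sphere (0 : E) 1) := ⟨fun p ↦ unitSphereProj ⟨_, hne p.1 p.2⟩,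
    continuous_unitSphereProj.comp (Continuous.subtype_mk (by fun_prop) _)⟩
  have hH0 (t : I) : H (0, t) = γ t := by
    ext; simp [H, unitSphereProj]
  have hHs (s : I) : H (s, 0) = x := by
    ext; simp [H, unitSphereProj, hg0, f]
  have hHt (s : I) : H (s, 1) = x := by
    ext; simp [H, unitSphereProj, hg1, f]
  let γ' : Path x x := ⟨⟨fun t ↦ H (1, t), by fun_prop⟩, hHs 1, hHt 1⟩
  have hγ : γ.Homotopic γ' := ⟨⟨⟨H, hH0, fun t ↦ rfl⟩, by
    rintro s t (rfl | rfl)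
    · simpa using hHs s
    · simpa using hHt s⟩⟩
  refine hγ.trans (γ'.homotopic_refl_of_forall_ne (v := ⟨v, by simp [hv]⟩) fun t h ↦
    hgv ‖g t‖⁻¹ t ?_)
  simpa [γ', H, unitSphereProj, -smul_add] using congr_arg Subtype.val h

end Sphere

section LensSpace

/-- The action of `ℤ/m` on the unit sphere of `ℂⁿ` which rotates the `i`-th coordinate by the
angle `2π lᵢ a / m`. -/
noncomputable abbrev lensAction (m n : ℕ) [NeZero m] (l : Fin n → ℤ) :
    MulAction (Multiplicative (ZMod m)) (sphere (0 : EuclideanSpace ℂ (Fin n)) 1) where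
  smul a z := ⟨WithLp.toLp 2 fun i ↦
    (ZMod.toCircle ((l i : ZMod m) * a.toAdd) : ℂ) * (z : EuclideanSpace ℂ (Fin n)) i, by
      have := norm_eq_of_mem_sphere z
      rw [EuclideanSpace.norm_eq] at this
      simpa [EuclideanSpace.norm_eq, Circle.norm_coe] using this⟩
  one_smul z := by
    ext i
    change (ZMod.toCircle ((l i : ZMod m) * 0) : ℂ) * (z : EuclideanSpace ℂ (Fin n)) i = _
    simp
  mul_smul a b z := by
    ext i
    change (ZMod.toCircle ((l i : ZMod m) * (a.toAdd + b.toAdd)) : ℂ) *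
      (z : EuclideanSpace ℂ (Fin n)) i = (ZMod.toCircle ((l i : ZMod m) * a.toAdd) : ℂ) *
      ((ZMod.toCircle ((l i : ZMod m) * b.toAdd) : ℂ) * (z : EuclideanSpace ℂ (Fin n)) i)
    rw [mul_add, AddChar.map_add_eq_mul, Circle.coe_mul, mul_assoc]

variable {m n : ℕ} [NeZero m] {l : Fin n → ℤ}

theorem lensAction_smul_apply (a : Multiplicative (ZMod m))
    (z : sphere (0 : EuclideanSpace ℂ (Fin n)) 1) (i : Fin n) :
    letI := lensAction m n l
    ((a • z : sphere (0 : EuclideanSpace ℂ (Fin n)) 1) : EuclideanSpace ℂ (Fin n)) i =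
      Complex.exp (2 * (Real.pi : ℂ) * Complex.I * (l i : ℂ) * (a.toAdd.val : ℂ) / (m : ℂ)) *
        (z : EuclideanSpace ℂ (Fin n)) i := by
  change (ZMod.toCircle ((l i : ZMod m) * a.toAdd) : ℂ) * (z : EuclideanSpace ℂ (Fin n)) i = _
  have : (l i : ZMod m) * a.toAdd = ((l i * (a.toAdd.val : ℤ) : ℤ) : ZMod m) := by simp
  rw [this, ZMod.toCircle_intCast]
  push_cast
  ring_nf

theorem continuousConstSMul_lensAction :
    letI := lensAction m n l
    ContinuousConstSMul (Multiplicative (ZMod m)) (sphere (0 : EuclideanSpace ℂ (Fin n)) 1) := by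
  let := lensAction m n l
  refine ⟨fun a ↦ Continuous.subtype_mk (f := fun z : sphere (0 : EuclideanSpace ℂ (Fin n)) 1 ↦
    WithLp.toLp 2 fun i ↦ (ZMod.toCircle ((l i : ZMod m) * a.toAdd) : ℂ) *
      (z : EuclideanSpace ℂ (Fin n)) i) (by fun_prop) _⟩

/-- The action defining a lens space is free. -/
theorem isCancelSMul_lensAction (hl : ∀ i, Int.gcd (l i) m = 1) :
    letI := lensAction m n l
    IsCancelSMul (Multiplicative (ZMod m)) (sphere (0 : EuclideanSpace ℂ (Fin n)) 1) := by
  let := lensAction m n l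
  refine isCancelSMul_iff_eq_one_of_smul_eq.mpr fun a z h ↦ ?_
  obtain ⟨i, hi⟩ : ∃ i, (z : EuclideanSpace ℂ (Fin n)) i ≠ 0 := by
    by_contra! hz
    exact ne_zero_of_mem_unit_sphere z (by ext i; simpa using hz i)
  have h1 : (ZMod.toCircle ((l i : ZMod m) * a.toAdd) : ℂ) * (z : EuclideanSpace ℂ (Fin n)) i =
      (z : EuclideanSpace ℂ (Fin n)) i := congr_arg (fun w ↦ (Subtype.val w) i) h
  have h2 : ZMod.toCircle ((l i : ZMod m) * a.toAdd) = ZMod.toCircle (0 : ZMod m) :=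
    Subtype.ext (by simpa [hi] using h1)
  have h3 : IsUnit (l i : ZMod m) :=
    (ZMod.coe_int_isUnit_iff_isCoprime _ _).mpr (Int.isCoprime_iff_gcd_eq_one.mpr (by
      rw [Int.gcd_comm]; exact hl i))
  exact toAdd_eq_zero.mp (h3.mul_right_eq_zero.mp (ZMod.injective_toCircle h2))

/-- The projection of the sphere onto a lens space is a quotient covering map. -/
theorem isQuotientCoveringMap_lens (hl : ∀ i, Int.gcd (l i) m = 1)
    {r : sphere (0 : EuclideanSpace ℂ (Fin n)) 1 → sphere (0 : EuclideanSpace ℂ (Fin n)) 1 → Prop}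
    (hr : letI := lensAction m n l
      ∀ z w, r z w ↔ ∃ a : Multiplicative (ZMod m), a • z = w) :
    letI := lensAction m n l
    IsQuotientCoveringMap (Quot.mk r) (Multiplicative (ZMod m)) := by
  let := lensAction m n l
  have := continuousConstSMul_lensAction (m := m) (n := n) (l := l)
  have := isCancelSMul_lensAction (m := m) hl
  have hr' (z w) : r z w ↔ z ∈ MulAction.orbit (Multiplicative (ZMod m)) w := by
    rw [hr, MulAction.mem_orbit_symm]; rfl
  have heqv : Equivalence r := by
    have : r = (MulAction.orbitRel (Multiplicative (ZMod m)) _).r := by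
      ext z w; exact hr' z w
    exact this ▸ (MulAction.orbitRel (Multiplicative (ZMod m)) _).iseqv
  exact isQuotientMap_quot_mk.isQuotientCoveringMap_of_properlyDiscontinuousSMul
    fun {z w} ↦ (heqv.quot_mk_eq_iff z w).trans (hr' z w)

end LensSpace

/-- Let `m ≥ 1`, `n ≥ 2`, and let `ℤ/m` act on the unit sphere `S^{2n-1} ⊆ ℂⁿ` coordinatewise
by `(a • z) i = exp(2πi·lᵢ·a/m) · z i`, where the integers `lᵢ` are coprime to `m`.  The
fundamental group of the lens space `L(l₁,…,lₙ)` (the orbit space with the quotient topology),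
at any basepoint, is isomorphic to the cyclic group `ℤ/m`. -/
theorem lens_space_fundamental_group (m n : ℕ) (hm : 0 < m) (hn : 2 ≤ n)
    (l : Fin n → ℤ) (hl : ∀ i, Int.gcd (l i) m = 1)
    (r : Metric.sphere (0 : EuclideanSpace ℂ (Fin n)) 1 →
      Metric.sphere (0 : EuclideanSpace ℂ (Fin n)) 1 → Prop)
    (hr : ∀ z w : Metric.sphere (0 : EuclideanSpace ℂ (Fin n)) 1,
      r z w ↔ ∃ a : ZMod m, ∀ i : Fin n,
        Complex.exp (2 * (Real.pi : ℂ) * Complex.I * (l i : ℂ) * (a.val : ℂ) / (m : ℂ))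
            * (z : EuclideanSpace ℂ (Fin n)) i
          = (w : EuclideanSpace ℂ (Fin n)) i)
    (p : Quot r) :
    Nonempty (FundamentalGroup (Quot r) p ≃* Multiplicative (ZMod m)) := by
  have : NeZero m := ⟨hm.ne'⟩
  let := lensAction m n l
  have hcov : IsQuotientCoveringMap (Quot.mk r) (Multiplicative (ZMod m)) :=
    isQuotientCoveringMap_lens hl fun z w ↦ (hr z w).trans <|
      Multiplicative.ofAdd.exists_congr fun a ↦ by
        rw [Subtype.ext_iff, PiLp.ext_iff]
        simp only [lensAction_smul_apply, toAdd_ofAdd]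
  have : SimplyConnectedSpace (sphere (0 : EuclideanSpace ℂ (Fin n)) 1) :=
    letI : InnerProductSpace ℝ (EuclideanSpace ℂ (Fin n)) := InnerProductSpace.complexToReal
    simplyConnectedSpace_sphere (by
      have := finrank_real_of_complex (EuclideanSpace ℂ (Fin n))
      rw [finrank_euclideanSpace_fin] at this
      exact lt_of_lt_of_eq (by omega) this.symm)
  obtain ⟨z, hz⟩ := hcov.surjective p
  exact ⟨(hcov.fundamentalGroupEquiv ⟨z, hz⟩).trans MulOpposite.opMulEquiv.symm⟩
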